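/- Let (R,m) be a Noetherian normal local domain, J an ideal of R of pure height one, and n ≥ 1 an integer such that J^{(n)} = αR is principal with α ≠ 0, while J^{(i)} is not principal for 0 < i < n. Let A be the subalgebra R[JT, J^{(2)}T², …] of the polynomial ring R[T] generated over R by all elements jT^i with j ∈ J^{(i)} and i ≥ 1, and let S = A/(αT^n − 1). Then the ideal 𝔪 of S generated by the images of m and of the sets J^{(i)}T^i for 0 < i < n is a maximal ideal of S, and 𝔪^n ⊆ mS. -/

import Mathlib

/-!
At every height-one prime, `J^{(n)} = αR` can be cancelled, so `J^{(n+i)} = αJ^{(i)}`. Since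
`αTⁿ = 1` in `S`, every homogeneous generator of `S` is the image of one of degree less than `n`,
so `R → S/𝔪` is surjective; moreover the `n`-th power of a generator comes from `R`, so `S` is
integral over `R`.

If elements of nonprincipal symbolic powers have degrees with sum `nk`, their product is `αᵏr` with
`r ∈ m`: were `r` a unit, each of these symbolic powers would be principal. Among any `n` degrees, a
nonempty subfamily sums to `0` modulo `n`, hence `𝔪ⁿ ⊆ mS`.

Comparing degrees, no nonzero constant is a multiple of `αTⁿ - 1`, so `R → S` is injective and
integral, and lying over gives `mS ≠ S`. Therefore `𝔪 ≠ S`, and `S/𝔪` is a nonzero quotient of `R`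
killed by `m`, that is, the residue field of `R`.
-/

/-- The `i`-th symbolic power of an ideal `J` of pure height one:
`J^{(i)} = {x ∈ R : x ∈ Jⁱ·R_P for every height-one prime ideal P of R}`, realized as
the intersection of the contractions of `Jⁱ·R_P` along `R → R_P` over all height-one
primes `P`. -/
def symbolicPower {R : Type*} [CommRing R] (J : Ideal R) (i : ℕ) : Ideal R :=
  sInf {I : Ideal R | ∃ (P : Ideal R) (hP : P.IsPrime),
    Order.height (⟨P, hP⟩ : PrimeSpectrum R) = 1 ∧
    I = Ideal.comap (algebraMap R (Localization (@Ideal.primeCompl R _ P hP)))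
      (Ideal.map (algebraMap R (Localization (@Ideal.primeCompl R _ P hP))) (J ^ i))}

/-- An ideal `J` of `R` has pure height one if every associated prime of `R/J`
has height one. -/
def IsPureHeightOne {R : Type*} [CommRing R] (J : Ideal R) : Prop :=
  ∀ P ∈ associatedPrimes R (R ⧸ J), ∀ (hP : Ideal.IsPrime P),
    Order.height (⟨P, hP⟩ : PrimeSpectrum R) = 1

lemma exists_finset_nonempty_sum_eq_zero {G : Type*} [AddCommGroup G] [Fintype G] {n : ℕ}
    (hG : Fintype.card G ≤ n) (f : Fin n → G) :
    ∃ t : Finset (Fin n), t.Nonempty ∧ ∑ i ∈ t, f i = 0 := by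
  let initial (b : Fin (n + 1)) : Finset (Fin n) := {i | i.castSucc < b}
  obtain ⟨b, c, hbc, hsum⟩ := Fintype.exists_ne_map_eq_of_card_lt
    (fun b ↦ ∑ i ∈ initial b, f i) (by simpa using Nat.lt_succ_of_le hG)
  wlog hlt : b < c generalizing b c
  · exact this c b hbc.symm hsum.symm (hbc.lt_or_gt.resolve_left hlt)
  have hsub : initial b ⊆ initial c := fun i hi ↦ by
    simp only [initial, Finset.mem_filter_univ] at hi ⊢
    exact hi.trans hlt
  refine ⟨initial c \ initial b, ⟨b.castPred (Fin.ne_last_of_lt hlt), ?_⟩, ?_⟩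
  · simpa [initial] using hlt
  · rw [Finset.sum_sdiff_eq_sub hsub, sub_eq_zero]
    exact hsum.symm

section SymbolicPower

variable {R : Type*} [CommRing R] {J : Ideal R} {i n : ℕ} {x α : R}

lemma mem_symbolicPower :
    x ∈ symbolicPower J i ↔ ∀ (P : Ideal R) (_ : P.IsPrime),
      Order.height (⟨P, ‹_›⟩ : PrimeSpectrum R) = 1 →
      algebraMap R (Localization.AtPrime P) x ∈
        (J ^ i).map (algebraMap R (Localization.AtPrime P)) := by
  simp only [symbolicPower, Ideal.mem_sInf, Set.mem_ofPred_eq]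
  constructor
  · intro h P hP hheight
    exact h ⟨P, hP, hheight, rfl⟩
  · rintro h _ ⟨P, hP, hheight, rfl⟩
    exact h P hP hheight

lemma pow_le_symbolicPower (J : Ideal R) (i : ℕ) : J ^ i ≤ symbolicPower J i :=
  fun _ hx ↦ mem_symbolicPower.2 fun _ _ _ ↦ Ideal.mem_map_of_mem _ hx

lemma symbolicPower_antitone (J : Ideal R) : Antitone (symbolicPower J) :=
  fun _ _ hij _ hx ↦ mem_symbolicPower.2 fun P hP hheight ↦
    Ideal.map_mono (Ideal.pow_le_pow_right hij) (mem_symbolicPower.1 hx P hP hheight)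

instance symbolicPower.gradedMonoid (J : Ideal R) : SetLike.GradedMonoid (symbolicPower J) where
  one_mem := pow_le_symbolicPower J 0 (by simp)
  mul_mem i j x y hx hy := mem_symbolicPower.2 fun P hP hheight ↦ by
    rw [map_mul, pow_add, Ideal.map_mul]
    exact Ideal.mul_mem_mul (mem_symbolicPower.1 hx P hP hheight)
      (mem_symbolicPower.1 hy P hP hheight)

lemma symbolicPower_add_le_span_singleton_mul (hα : α ∈ nonZeroDivisors R)
    (hJn : symbolicPower J n = Ideal.span {α}) (i : ℕ) :
    symbolicPower J (n + i) ≤ Ideal.span {α} * symbolicPower J i := by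
  intro x hx
  obtain ⟨y, rfl⟩ : α ∣ x := by
    rw [← Ideal.mem_span_singleton, ← hJn]
    exact symbolicPower_antitone J (Nat.le_add_right n i) hx
  refine Ideal.mul_mem_mul (Ideal.mem_span_singleton_self α)
    (mem_symbolicPower.2 fun P hP hheight ↦ ?_)
  let toLoc := algebraMap R (Localization.AtPrime P)
  have hpow : (J ^ n).map toLoc ≤ Ideal.span {toLoc α} := by
    rw [← Set.image_singleton, ← Ideal.map_span, ← hJn]
    exact Ideal.map_mono (pow_le_symbolicPower J n)
  have hmem : toLoc (α * y) ∈ Ideal.span {toLoc α} * (J ^ i).map toLoc := by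
    have := mem_symbolicPower.1 hx P hP hheight
    rw [pow_add, Ideal.map_mul] at this
    exact Ideal.mul_mono_left hpow this
  obtain ⟨z, hz, hzy⟩ := Ideal.mem_span_singleton_mul.1 hmem
  rw [map_mul] at hzy
  have hα' : toLoc α ∈ nonZeroDivisors (Localization.AtPrime P) :=
    IsLocalization.nonZeroDivisors_le_comap P.primeCompl _ hα
  rwa [← (mul_cancel_left_mem_nonZeroDivisors hα').1 hzy]

end SymbolicPower

section PeriodicFiltration

variable {R : Type*} [CommRing R] {I : ℕ → Ideal R} {n : ℕ} {α : R}

lemma le_span_pow_mul_of_add_le (hI : ∀ i, I (n + i) ≤ Ideal.span {α} * I i) (k i : ℕ) :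
    I (n * k + i) ≤ Ideal.span {α ^ k} * I i := by
  induction k with
  | zero => simp
  | succ k ih =>
    calc I (n * (k + 1) + i) = I (n + (n * k + i)) := by congr 1; ring
      _ ≤ Ideal.span {α} * I (n * k + i) := hI _
      _ ≤ Ideal.span {α} * (Ideal.span {α ^ k} * I i) := Ideal.mul_mono_right ih
      _ = Ideal.span {α ^ (k + 1)} * I i := by
        rw [← mul_assoc, Ideal.span_singleton_mul_span_singleton, pow_succ']

lemma pow_dvd_of_mem_of_add_le (hI : ∀ i, I (n + i) ≤ Ideal.span {α} * I i) {k : ℕ} {x : R}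
    (hx : x ∈ I (n * k)) : α ^ k ∣ x := by
  have hmem : x ∈ Ideal.span {α ^ k} * I 0 := le_span_pow_mul_of_add_le hI k 0 hx
  exact Ideal.mem_span_singleton.1 (Ideal.mul_le_left hmem)

variable [IsLocalRing R] [SetLike.GradedMonoid I]

-- If `r` were a unit, then `x * y` would divide `z * y` for all `z ∈ I i`, so `I i = (x)`.
lemma exists_mem_maximalIdeal_mul_eq (hα : α ∈ nonZeroDivisors R)
    (hI : ∀ i, I (n + i) ≤ Ideal.span {α} * I i) {i j k : ℕ} (hij : i + j = n * k)
    (hi : ¬ (I i).IsPrincipal) {x y : R} (hx : x ∈ I i) (hy : y ∈ I j) :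
    ∃ r ∈ IsLocalRing.maximalIdeal R, x * y = α ^ k * r := by
  have hdvd (z) (hz : z ∈ I i) : α ^ k ∣ z * y :=
    pow_dvd_of_mem_of_add_le hI (hij ▸ SetLike.mul_mem_graded hz hy)
  obtain ⟨r, hr⟩ := hdvd x hx
  refine ⟨r, (IsLocalRing.mem_maximalIdeal r).2 fun hunit ↦ hi ⟨x, ?_⟩, hr⟩
  have hxy : x * y ∈ nonZeroDivisors R :=
    hr ▸ mul_mem (pow_mem hα k) hunit.mem_nonZeroDivisors
  have hyreg : y ∈ nonZeroDivisors R := (mul_mem_nonZeroDivisors.1 hxy).2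
  refine le_antisymm (fun z hz ↦ Ideal.mem_span_singleton.2 ?_)
    ((Ideal.span_singleton_le_iff_mem _).2 hx)
  rw [← dvd_cancel_right_mem_nonZeroDivisors hyreg, hr, hunit.mul_right_dvd]
  exact hdvd z hz

lemma exists_mem_maximalIdeal_prod_eq {ι : Type*} (hα : α ∈ nonZeroDivisors R)
    (hI : ∀ i, I (n + i) ≤ Ideal.span {α} * I i) {t : Finset ι} (ht : t.Nonempty)
    {d : ι → ℕ} {c : ι → R} (hd : ∀ i ∈ t, ¬ (I (d i)).IsPrincipal)
    (hc : ∀ i ∈ t, c i ∈ I (d i)) {k : ℕ} (hk : ∑ i ∈ t, d i = n * k) :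
    ∃ r ∈ IsLocalRing.maximalIdeal R, ∏ i ∈ t, c i = α ^ k * r := by
  classical
  obtain ⟨b, hb⟩ := ht
  rw [← Finset.mul_prod_erase t c hb]
  rw [← Finset.add_sum_erase t d hb] at hk
  exact exists_mem_maximalIdeal_mul_eq hα hI hk (hd b hb) (hc b hb)
    (SetLike.prod_mem_graded _ _ _ fun i hi ↦ hc i (Finset.mem_of_mem_erase hi))

end PeriodicFiltration

section ReesAlgebra

open Polynomial

variable {R : Type*} [CommRing R]

lemma eq_zero_of_C_mul_X_pow_sub_one_dvd_C {α r : R} {n : ℕ} (hn : n ≠ 0)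
    (hα : α ∈ nonZeroDivisors R) (h : C α * X ^ n - 1 ∣ C r) : r = 0 := by
  nontriviality R
  obtain ⟨b, hb⟩ := h
  have hα0 : α ≠ 0 := nonZeroDivisors.ne_zero hα
  have hdeg : (C α * X ^ n - 1 : R[X]).natDegree = n := by
    rw [← C_1, natDegree_sub_C, natDegree_C_mul_X_pow n α hα0]
  have hlead : (C α * X ^ n - 1 : R[X]).leadingCoeff = α := by
    rw [leadingCoeff, hdeg]
    simp [coeff_one, hn]
  by_contra hr
  have hb0 : b ≠ 0 := by
    rintro rfl
    exact hr (C_eq_zero.1 (hb.trans (mul_zero _)))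
  have hmul : α * b.leadingCoeff ≠ 0 := fun h0 ↦
    hb0 (leadingCoeff_eq_zero.1 ((mul_left_mem_nonZeroDivisors_eq_zero_iff hα).1 h0))
  have := congrArg natDegree hb
  rw [natDegree_C, natDegree_mul' (by rwa [hlead]), hdeg] at this
  omega

/-- The Rees algebra `R[I₁T, I₂T², …] ⊆ R[T]` of a family of ideals. -/
noncomputable def familyReesAlgebra (I : ℕ → Ideal R) : Subalgebra R R[X] :=
  Algebra.adjoin R {f : R[X] | ∃ i : ℕ, 1 ≤ i ∧ ∃ j ∈ I i, f = C j * X ^ i}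

variable {I : ℕ → Ideal R} {S : Type*} [CommRing S] [Algebra R S]
  {π : familyReesAlgebra I →ₐ[R] S} {n : ℕ} {α : R} {a : familyReesAlgebra I}

namespace familyReesAlgebra

lemma C_mul_X_pow_mem {i : ℕ} {j : R} (hj : j ∈ I i) :
    C j * X ^ i ∈ familyReesAlgebra I := by
  obtain rfl | hi := i.eq_zero_or_pos
  · simpa using (familyReesAlgebra I).algebraMap_mem j
  · exact Algebra.subset_adjoin ⟨i, hi, j, hj, rfl⟩

lemma eq_top_of_forall_map_mem (hπ : Function.Surjective π) (B : Subalgebra R S)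
    (hB : ∀ (x : familyReesAlgebra I) (i : ℕ), ∀ j ∈ I i, (x : R[X]) = C j * X ^ i → π x ∈ B) :
    B = ⊤ := by
  have hcomap : B.comap π = ⊤ := by
    rw [← top_le_iff]
    exact Algebra.adjoin_adjoin_coe_preimage.ge.trans
      (Algebra.adjoin_le fun x ⟨i, _, j, hj, hx⟩ ↦ hB x i j hj hx)
  refine Algebra.eq_top_iff.2 fun s ↦ ?_
  obtain ⟨x, rfl⟩ := hπ s
  exact Algebra.eq_top_iff.1 hcomap x

section Relation

variable (ha : (a : R[X]) = C α * X ^ n - 1) (hπa : π a = 0)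
include ha hπa

lemma map_eq_map_of_coe_eq {x y : familyReesAlgebra I} {k : ℕ}
    (h : (x : R[X]) = (C α * X ^ n) ^ k * (y : R[X])) : π x = π y := by
  have hx : x = (a + 1) ^ k * y := Subtype.ext (by simp [h, ha])
  simp [hx, hπa]

lemma map_eq_algebraMap_of_coe_eq {x : familyReesAlgebra I} {k : ℕ} {r : R}
    (h : (x : R[X]) = C (α ^ k * r) * X ^ (n * k)) : π x = algebraMap R S r := by
  rw [← π.commutes r]
  refine map_eq_map_of_coe_eq ha hπa (k := k) ?_
  simp only [h, C_mul, C_pow, Subalgebra.coe_algebraMap, algebraMap_eq]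
  ring

lemma exists_lt_map_eq_map (hn : 0 < n) (hI : ∀ i, I (n + i) ≤ Ideal.span {α} * I i)
    {x : familyReesAlgebra I} {i : ℕ} {j : R} (hj : j ∈ I i) (hx : (x : R[X]) = C j * X ^ i) :
    ∃ d < n, ∃ c ∈ I d, ∃ y : familyReesAlgebra I, (y : R[X]) = C c * X ^ d ∧ π x = π y := by
  rw [← Nat.div_add_mod i n] at hj
  obtain ⟨c, hc, rfl⟩ := Ideal.mem_span_singleton_mul.1 (le_span_pow_mul_of_add_le hI _ _ hj)
  refine ⟨i % n, Nat.mod_lt i hn, c, hc, ⟨_, C_mul_X_pow_mem hc⟩, rfl,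
    map_eq_map_of_coe_eq ha hπa (k := i / n) ?_⟩
  calc (x : R[X]) = C (α ^ (i / n) * c) * X ^ (n * (i / n) + i % n) := by
        rw [hx, Nat.div_add_mod]
    _ = (C α * X ^ n) ^ (i / n) * (C c * X ^ (i % n)) := by
        simp only [C_mul, C_pow, pow_add, pow_mul]; ring

lemma isIntegral_of_surjective [SetLike.GradedMonoid I] (hn : 0 < n)
    (hI : ∀ i, I (n + i) ≤ Ideal.span {α} * I i) (hπ : Function.Surjective π) :
    Algebra.IsIntegral R S := by
  rw [← integralClosure_eq_top_iff]
  refine eq_top_of_forall_map_mem hπ _ fun x i j hj hx ↦ IsIntegral.of_pow hn ?_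
  obtain ⟨r, hr⟩ : α ^ i ∣ j ^ n := pow_dvd_of_mem_of_add_le hI (SetLike.pow_mem_graded n hj)
  have hpow : π (x ^ n) = algebraMap R S r := map_eq_algebraMap_of_coe_eq ha hπa (k := i) (by
    rw [← hr, C_pow, pow_mul', ← mul_pow, ← hx, SubmonoidClass.coe_pow])
  rw [← map_pow, hpow]
  exact isIntegral_algebraMap

end Relation

lemma algebraMap_injective (hα : α ∈ nonZeroDivisors R) (hn : n ≠ 0)
    (ha : (a : R[X]) = C α * X ^ n - 1) (hker : RingHom.ker π = Ideal.span {a}) :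
    Function.Injective (algebraMap R S) := by
  refine (injective_iff_map_eq_zero _).2 fun r hr ↦ eq_zero_of_C_mul_X_pow_sub_one_dvd_C hn hα ?_
  have hmem : algebraMap R (familyReesAlgebra I) r ∈ Ideal.span {a} := by
    rw [← hker, RingHom.mem_ker, π.commutes, hr]
  obtain ⟨b, hb⟩ := Ideal.mem_span_singleton.1 hmem
  exact ⟨b, by rw [← ha, ← MulMemClass.coe_mul, ← hb]; rfl⟩

end familyReesAlgebra

variable [IsLocalRing R]

open familyReesAlgebra

/-- The ideal of a quotient `π : R[I₁T, I₂T², …] → S` generated by the images of the maximal ideal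
of `R` and of the elements `jTⁱ` with `j ∈ Iᵢ` and `0 < i < n`. -/
def familyReesIdeal (π : familyReesAlgebra I →ₐ[R] S) (n : ℕ) : Ideal S :=
  Ideal.span {z | ∃ x, π x = z ∧
    ((∃ r ∈ IsLocalRing.maximalIdeal R, (x : R[X]) = C r) ∨
      ∃ i : ℕ, 0 < i ∧ i < n ∧ ∃ j ∈ I i, (x : R[X]) = C j * X ^ i)}

lemma map_maximalIdeal_le_familyReesIdeal :
    (IsLocalRing.maximalIdeal R).map (algebraMap R S) ≤ familyReesIdeal π n :=
  Ideal.map_le_iff_le_comap.2 fun r hr ↦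
    Ideal.subset_span ⟨algebraMap R _ r, π.commutes r, .inl ⟨r, hr, rfl⟩⟩

lemma algebraMap_quotient_familyReesIdeal_surjective (hn : 0 < n)
    (hI : ∀ i, I (n + i) ≤ Ideal.span {α} * I i) (ha : (a : R[X]) = C α * X ^ n - 1)
    (hπa : π a = 0) (hπ : Function.Surjective π) :
    Function.Surjective (algebraMap R (S ⧸ familyReesIdeal π n)) := by
  let q := Ideal.Quotient.mkₐ R (familyReesIdeal π n)
  have hq : Function.Surjective (q.comp π) := (Ideal.Quotient.mkₐ_surjective R _).comp hπ
  suffices (Algebra.ofId R (S ⧸ familyReesIdeal π n)).range = ⊤ from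
    AlgHom.range_eq_top _ |>.1 this
  refine eq_top_of_forall_map_mem hq _ fun x i j hj hx ↦ ?_
  obtain ⟨d, hdn, c, hc, y, hy, hxy⟩ := exists_lt_map_eq_map ha hπa hn hI hj hx
  rw [AlgHom.comp_apply, hxy]
  obtain rfl | hd := d.eq_zero_or_pos
  · have hyc : y = algebraMap R _ c := Subtype.ext (by simpa using hy)
    exact ⟨c, by rw [hyc, π.commutes]; rfl⟩
  · have hmem : π y ∈ familyReesIdeal π n :=
      Ideal.subset_span ⟨y, rfl, .inr ⟨d, hd, hdn, c, hc, hy⟩⟩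
    exact ⟨0, by rw [map_zero]; exact (Ideal.Quotient.eq_zero_iff_mem.2 hmem).symm⟩

lemma prod_map_mem_map_maximalIdeal [SetLike.GradedMonoid I] (hα : α ∈ nonZeroDivisors R)
    (hn : n ≠ 0) (hI : ∀ i, I (n + i) ≤ Ideal.span {α} * I i)
    (ha : (a : R[X]) = C α * X ^ n - 1) (hπa : π a = 0) {x : Fin n → familyReesAlgebra I}
    {d : Fin n → ℕ} {c : Fin n → R} (hd : ∀ i, ¬ (I (d i)).IsPrincipal) (hc : ∀ i, c i ∈ I (d i))
    (hx : ∀ i, (x i : R[X]) = C (c i) * X ^ d i) :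
    ∏ i, π (x i) ∈ (IsLocalRing.maximalIdeal R).map (algebraMap R S) := by
  have : NeZero n := ⟨hn⟩
  obtain ⟨t, ht, hsum⟩ := exists_finset_nonempty_sum_eq_zero (ZMod.card n).le
    fun i ↦ (d i : ZMod n)
  rw [← Nat.cast_sum, ZMod.natCast_eq_zero_iff] at hsum
  obtain ⟨k, hk⟩ := hsum
  obtain ⟨r, hr, hprod⟩ := exists_mem_maximalIdeal_prod_eq hα hI ht (fun i _ ↦ hd i)
    (fun i _ ↦ hc i) hk
  have hcoe : ((∏ i ∈ t, x i : familyReesAlgebra I) : R[X]) = C (α ^ k * r) * X ^ (n * k) := by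
    rw [← hprod, ← hk, map_prod, ← Finset.prod_pow_eq_pow_sum, ← Finset.prod_mul_distrib,
      SubmonoidClass.coe_finsetProd]
    exact Finset.prod_congr rfl fun i _ ↦ hx i
  rw [← Finset.prod_mul_prod_compl t, ← map_prod, map_eq_algebraMap_of_coe_eq ha hπa hcoe]
  exact Ideal.mul_mem_right _ _ (Ideal.mem_map_of_mem _ hr)

lemma familyReesIdeal_pow_le [SetLike.GradedMonoid I] (hα : α ∈ nonZeroDivisors R) (hn : n ≠ 0)
    (hI : ∀ i, I (n + i) ≤ Ideal.span {α} * I i)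
    (hprin : ∀ i, 0 < i → i < n → ¬ (I i).IsPrincipal)
    (ha : (a : R[X]) = C α * X ^ n - 1) (hπa : π a = 0) :
    familyReesIdeal π n ^ n ≤ (IsLocalRing.maximalIdeal R).map (algebraMap R S) := by
  rw [familyReesIdeal, Ideal.span, Submodule.span_pow, ← Ideal.span, Ideal.span_le]
  intro z hz
  obtain ⟨f, rfl⟩ := Set.mem_pow.1 hz
  choose x hxf hx using fun i ↦ (f i).2
  simp only [List.prod_ofFn, ← hxf, SetLike.mem_coe]
  by_cases hconst : ∃ i, ∃ r ∈ IsLocalRing.maximalIdeal R, (x i : R[X]) = C r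
  · obtain ⟨i, r, hr, hxr⟩ := hconst
    have hxi : π (x i) = algebraMap R S r := by
      rw [← π.commutes]; exact congrArg π (Subtype.ext hxr)
    rw [← Finset.mul_prod_erase _ _ (Finset.mem_univ i), hxi]
    exact Ideal.mul_mem_right _ _ (Ideal.mem_map_of_mem _ hr)
  · choose d hd hdn c hc hxc using fun i ↦ (hx i).resolve_left (not_exists.1 hconst i)
    exact prod_map_mem_map_maximalIdeal hα hn hI ha hπa (fun i ↦ hprin _ (hd i) (hdn i)) hc hxc

lemma isMaximal_of_algebraMap_quotient_surjective {Q : Ideal S} (hQ : Q ≠ ⊤)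
    (hle : (IsLocalRing.maximalIdeal R).map (algebraMap R S) ≤ Q)
    (hsurj : Function.Surjective (algebraMap R (S ⧸ Q))) : Q.IsMaximal := by
  have hbot : (IsLocalRing.maximalIdeal R).map (algebraMap R (S ⧸ Q)) = ⊥ := by
    rw [IsScalarTower.algebraMap_eq R S (S ⧸ Q), ← Ideal.map_map, eq_bot_iff,
      ← Ideal.map_quotient_self Q]
    exact Ideal.map_mono hle
  have : Nontrivial (S ⧸ Q) := Ideal.Quotient.nontrivial_iff.2 hQ
  rw [← Ideal.bot_quotient_isMaximal_iff, ← hbot]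
  exact (Ideal.map_eq_top_or_isMaximal_of_surjective _ hsurj
    (IsLocalRing.maximalIdeal.isMaximal R)).resolve_left (hbot ▸ bot_ne_top)

lemma familyReesIdeal_isMaximal [SetLike.GradedMonoid I] (hα : α ∈ nonZeroDivisors R) (hn : 0 < n)
    (hI : ∀ i, I (n + i) ≤ Ideal.span {α} * I i)
    (hprin : ∀ i, 0 < i → i < n → ¬ (I i).IsPrincipal)
    (ha : (a : R[X]) = C α * X ^ n - 1) (hker : RingHom.ker π = Ideal.span {a})
    (hπ : Function.Surjective π) : (familyReesIdeal π n).IsMaximal := by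
  have hπa : π a = 0 := by
    rw [← RingHom.mem_ker, hker]
    exact Ideal.mem_span_singleton_self a
  have hint : Algebra.IsIntegral R S := isIntegral_of_surjective ha hπa hn hI hπ
  have hmap : (IsLocalRing.maximalIdeal R).map (algebraMap R S) ≠ ⊤ :=
    (Ideal.map_eq_top_iff _ (algebraMap_injective hα hn.ne' ha hker)
      (algebraMap_isIntegral_iff.2 hint)).not.2 (IsLocalRing.maximalIdeal.isMaximal R).ne_top
  refine isMaximal_of_algebraMap_quotient_surjective (fun htop ↦ hmap ?_)
    map_maximalIdeal_le_familyReesIdeal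
    (algebraMap_quotient_familyReesIdeal_surjective hn hI ha hπa hπ)
  have hpow := familyReesIdeal_pow_le hα hn.ne' hI hprin ha hπa
  rwa [htop, Ideal.top_pow, top_le_iff] at hpow

end ReesAlgebra

open Polynomial in
theorem stmt6_general {R : Type*} [CommRing R] [IsLocalRing R]
    (J : Ideal R) (n : ℕ) (hn : 1 ≤ n) (α : R) (hα : α ∈ nonZeroDivisors R)
    (hJn : symbolicPower J n = Ideal.span {α})
    (hnotprin : ∀ i : ℕ, 0 < i → i < n → ¬ (symbolicPower J i).IsPrincipal)
    (A : Subalgebra R R[X])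
    (hA : A = Algebra.adjoin R {f : R[X] | ∃ i : ℕ, 1 ≤ i ∧
      ∃ j ∈ symbolicPower J i, f = C j * X ^ i})
    (a : A) (ha : (a : R[X]) = C α * X ^ n - 1)
    (𝔪 : Ideal (A ⧸ Ideal.span {a}))
    (h𝔪 : 𝔪 = Ideal.span {z : A ⧸ Ideal.span {a} | ∃ x : A,
      Ideal.Quotient.mk (Ideal.span {a}) x = z ∧
      ((∃ r ∈ IsLocalRing.maximalIdeal R, (x : R[X]) = C r) ∨
        (∃ i : ℕ, 0 < i ∧ i < n ∧ ∃ j ∈ symbolicPower J i, (x : R[X]) = C j * X ^ i))}) :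
    𝔪.IsMaximal ∧
      𝔪 ^ n ≤ Ideal.span {z : A ⧸ Ideal.span {a} | ∃ r ∈ IsLocalRing.maximalIdeal R,
        z = Ideal.Quotient.mk (Ideal.span {a}) (algebraMap R A r)} := by
  obtain rfl : A = familyReesAlgebra (symbolicPower J) := hA
  let π := Ideal.Quotient.mkₐ R (Ideal.span {a})
  obtain rfl : 𝔪 = familyReesIdeal (I := symbolicPower J)
      (S := familyReesAlgebra (symbolicPower J) ⧸ Ideal.span {a}) π n := h𝔪
  have hI := symbolicPower_add_le_span_singleton_mul hα hJn
  have hker : RingHom.ker π = Ideal.span {a} := Ideal.Quotient.mkₐ_ker R _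
  have hπa : π a = 0 := Ideal.Quotient.eq_zero_iff_mem.2 (Ideal.mem_span_singleton_self a)
  refine ⟨familyReesIdeal_isMaximal hα hn hI hnotprin ha hker
    (Ideal.Quotient.mkₐ_surjective R _), ?_⟩
  exact (familyReesIdeal_pow_le hα (by omega) hI hnotprin ha hπa).trans
    (Ideal.map_le_iff_le_comap.2 fun r hr ↦ Ideal.subset_span ⟨r, hr, rfl⟩)

set_option synthInstance.maxHeartbeats 1000000 in
set_option maxHeartbeats 1000000 in
open Polynomial in
/-- Let `(R,m)` be a Noetherian normal local domain, `J` an ideal of pure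
height one, and `n ≥ 1` such that `J^{(n)} = αR` is principal with `α ≠ 0`, while
`J^{(i)}` is not principal for `0 < i < n`. Let `A = R[JT, J^{(2)}T², …] ⊆ R[T]` and
`S = A/(αTⁿ − 1)`. Then the ideal `𝔪` of `S` generated by the images of `m` and of the
sets `J^{(i)}Tⁱ` for `0 < i < n` is a maximal ideal of `S`, and `𝔪ⁿ ⊆ mS`. -/
theorem stmt6 {R : Type*} [CommRing R] [IsNoetherianRing R] [IsLocalRing R] [IsDomain R]
    [IsIntegrallyClosed R]
    (J : Ideal R) (hJ : IsPureHeightOne J)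
    (n : ℕ) (hn : 1 ≤ n) (α : R) (hα : α ≠ 0)
    (hJn : symbolicPower J n = Ideal.span {α})
    (hnotprin : ∀ i : ℕ, 0 < i → i < n → ¬ (symbolicPower J i).IsPrincipal)
    (A : Subalgebra R (Polynomial R))
    (hA : A = Algebra.adjoin R {f : Polynomial R | ∃ i : ℕ, 1 ≤ i ∧
      ∃ j ∈ symbolicPower J i, f = C j * X ^ i})
    (a : A) (ha : (a : Polynomial R) = C α * X ^ n - 1)
    (𝔪 : Ideal (A ⧸ Ideal.span {a}))
    (h𝔪 : 𝔪 = Ideal.span {z : A ⧸ Ideal.span {a} | ∃ x : A,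
      Ideal.Quotient.mk (Ideal.span {a}) x = z ∧
      ((∃ r ∈ IsLocalRing.maximalIdeal R, (x : Polynomial R) = C r) ∨
        (∃ i : ℕ, 0 < i ∧ i < n ∧ ∃ j ∈ symbolicPower J i,
          (x : Polynomial R) = C j * X ^ i))}) :
    𝔪.IsMaximal ∧
      𝔪 ^ n ≤ Ideal.span {z : A ⧸ Ideal.span {a} | ∃ r ∈ IsLocalRing.maximalIdeal R,
        z = Ideal.Quotient.mk (Ideal.span {a}) (algebraMap R A r)} :=
  stmt6_general J n hn α (mem_nonZeroDivisors_of_ne_zero hα) hJn hnotprin A hA a ha 𝔪 h𝔪
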